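/- (Karcher equation) Let A₁, …, Aₙ be m×m positive definite complex matrices, let w = (w₁, …, wₙ) be a weight (wᵢ > 0, Σᵢ wᵢ = 1), and let X be positive definite. Then X minimizes the function Y ↦ Σᵢ wᵢ δ²(Y, Aᵢ) over positive definite matrices if and only if Σᵢ wᵢ log(X^{-1/2} Aᵢ X^{-1/2}) = 0. -/

import Mathlib

/-!
The symmetric divergence `d(P, Q) = Re tr(P⁻¹Q + Q⁻¹P - 2)` is invariant under congruence, dominates
`‖log Q - log P‖₂²` because `|x| ≤ |sinh x|`, and agrees with `δ²` to second order along
`t ↦ exp (t S)`. Cutting the geodesic `t ↦ P^{1/2} exp (t S) P^{1/2}` from `P` to `Q` into `N` equal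
pieces and letting `N → ∞` therefore gives the exponential metric increasing property
`‖log Q - log P‖₂ ≤ δ(P, Q)`, with equality for `P = 1`.

By congruence invariance one may take `X = 1` and write `Bᵢ` for the data. Expanding
`‖log Bᵢ - log Y‖₂² ≤ δ²(Y, Bᵢ)` shows that `∑ wᵢ log Bᵢ = 0` is sufficient for minimality.
Conversely, put `S = ∑ wᵢ log Bᵢ`. Read at the point `exp (2tS)` instead of `1`, the same inequality
says that moving from `1` to `exp (2tS)` lowers the cost by at least
`4t ∑ wᵢ ⟪S, log (exp (-tS) Bᵢ exp (-tS))⟫`; at a minimum this is nonpositive for `t > 0`, and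
`t → 0` gives `‖S‖₂² ≤ 0`.
-/

open Matrix
open scoped ComplexOrder

noncomputable def matFun {m : ℕ} (f : ℝ → ℝ) (A : Matrix (Fin m) (Fin m) ℂ) :
    Matrix (Fin m) (Fin m) ℂ :=
  if hA : A.IsHermitian then
    (hA.eigenvectorUnitary : Matrix (Fin m) (Fin m) ℂ) *
      Matrix.diagonal (fun i => (f (hA.eigenvalues i) : ℂ)) *
      (star (hA.eigenvectorUnitary : Matrix (Fin m) (Fin m) ℂ))
  else 0

/-- The unique positive definite square root of a positive definite matrix
(realized via the spectral decomposition). -/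
noncomputable def msqrt {m : ℕ} (A : Matrix (Fin m) (Fin m) ℂ) : Matrix (Fin m) (Fin m) ℂ :=
  matFun Real.sqrt A

/-- The logarithm of a positive definite matrix: the unique Hermitian `L` with `exp L = A`. -/
noncomputable def mlog {m : ℕ} (A : Matrix (Fin m) (Fin m) ℂ) : Matrix (Fin m) (Fin m) ℂ :=
  matFun Real.log A

/-- The real power `A ^ t` of a positive definite matrix, via the spectral decomposition. -/
noncomputable def mpow {m : ℕ} (A : Matrix (Fin m) (Fin m) ℂ) (t : ℝ) : Matrix (Fin m) (Fin m) ℂ :=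
  matFun (fun x => x ^ t) A

/-- The matrix geometric mean `A # B`. -/
noncomputable def gmean {m : ℕ} (A B : Matrix (Fin m) (Fin m) ℂ) : Matrix (Fin m) (Fin m) ℂ :=
  msqrt A * msqrt ((msqrt A)⁻¹ * B * (msqrt A)⁻¹) * msqrt A

/-- The weighted geometric mean `A #_t B`. -/
noncomputable def wgmean {m : ℕ} (A B : Matrix (Fin m) (Fin m) ℂ) (t : ℝ) :
    Matrix (Fin m) (Fin m) ℂ :=
  msqrt A * mpow ((msqrt A)⁻¹ * B * (msqrt A)⁻¹) t * msqrt A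

/-- The Frobenius (Hilbert–Schmidt) norm `‖X‖₂ = (Tr(X*X))^{1/2}`. -/
noncomputable def fnorm {m : ℕ} (X : Matrix (Fin m) (Fin m) ℂ) : ℝ :=
  Real.sqrt ((Xᴴ * X).trace.re)

/-- The Riemannian metric `δ(A,B) = ‖log(A^{-1/2} B A^{-1/2})‖₂`. -/
noncomputable def rdist {m : ℕ} (A B : Matrix (Fin m) (Fin m) ℂ) : ℝ :=
  fnorm (mlog ((msqrt A)⁻¹ * B * (msqrt A)⁻¹))

/-- The Loewner order: `A ≤ B` iff `B - A` is positive semidefinite. -/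
def Loewner {m : ℕ} (A B : Matrix (Fin m) (Fin m) ℂ) : Prop :=
  (B - A).PosSemidef

section ScalarEstimates

open Filter Topology

theorem sq_two_mul_sinh_half (x : ℝ) :
    (2 * Real.sinh (x / 2)) ^ 2 = Real.exp x + Real.exp (-x) - 2 := by
  have hexp : Real.exp x = Real.exp (x / 2) ^ 2 := by rw [← Real.exp_nat_mul]; ring_nf
  have hexp_neg : Real.exp (-x) = Real.exp (-(x / 2)) ^ 2 := by rw [← Real.exp_nat_mul]; ring_nf
  have hmul : Real.exp (x / 2) * Real.exp (-(x / 2)) = 1 := by rw [← Real.exp_add]; simp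
  rw [Real.sinh_eq, hexp, hexp_neg]
  linear_combination -2 * hmul

theorem sq_le_exp_add_exp_neg_sub_two (x : ℝ) : x ^ 2 ≤ Real.exp x + Real.exp (-x) - 2 := by
  have half_sq_le : (x / 2) ^ 2 ≤ Real.sinh (x / 2) ^ 2 := by
    rw [sq_le_sq, Real.abs_sinh]
    exact Real.self_le_sinh_iff.2 (abs_nonneg _)
  linarith [sq_two_mul_sinh_half x]

theorem sq_log_sub_log_le {p q : ℝ} (hp : 0 < p) (hq : 0 < q) :
    (Real.log q - Real.log p) ^ 2 ≤ p⁻¹ * q + p * q⁻¹ - 2 := by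
  have := sq_le_exp_add_exp_neg_sub_two (Real.log q - Real.log p)
  rwa [neg_sub, Real.exp_sub, Real.exp_sub, Real.exp_log hp, Real.exp_log hq, div_eq_inv_mul,
    div_eq_mul_inv] at this

theorem tendsto_two_mul_sinh_div (κ : ℝ) :
    Tendsto (fun h ↦ 2 * Real.sinh (h * κ / 2) / h) (𝓝[>] 0) (𝓝 κ) := by
  have hderiv : HasDerivAt (fun h ↦ 2 * Real.sinh (h * κ / 2)) κ 0 := by
    have := ((((hasDerivAt_id (0 : ℝ)).mul_const κ).div_const 2).sinh).const_mul 2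
    convert! this using 1
    simp only [id_eq, zero_mul, zero_div, Real.cosh_zero, one_mul]
    ring
  simpa [div_eq_inv_mul] using hderiv.tendsto_slope_zero_right

theorem dist_le_of_tendsto_modulus {X : Type*} [PseudoMetricSpace X] {f : ℝ → X} {g : ℝ → ℝ}
    {L : ℝ} (hfg : ∀ s t, dist (f s) (f t) ≤ g (t - s))
    (hg : Tendsto (fun h ↦ g h / h) (𝓝[>] 0) (𝓝 L)) : dist (f 0) (f 1) ≤ L := by
  have hlim : Tendsto (fun N : ℕ ↦ g (N : ℝ)⁻¹ / (N : ℝ)⁻¹) atTop (𝓝 L) :=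
    hg.comp (tendsto_inv_atTop_nhdsGT_zero.comp tendsto_natCast_atTop_atTop)
  refine ge_of_tendsto hlim (eventually_ne_atTop 0 |>.mono fun N hN ↦ ?_)
  have step {k : ℕ} (_ : k < N) : dist (f (k / N)) (f ((k + 1 : ℕ) / N)) ≤ g (N : ℝ)⁻¹ := by
    convert! hfg (k / N) ((k + 1 : ℕ) / N) using 2
    push_cast
    ring
  simpa [div_self (Nat.cast_ne_zero.2 hN : (N : ℝ) ≠ 0), mul_comm] using
    dist_le_range_sum_of_dist_le (f := fun k : ℕ ↦ f (k / N)) N step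

end ScalarEstimates

section FunctionalCalculus

variable {n 𝕜 : Type*} [RCLike 𝕜] [Fintype n] [DecidableEq n] {A B S : Matrix n n 𝕜}

theorem continuousOn_spectrum (f : ℝ → ℝ) (A : Matrix n n 𝕜) :
    ContinuousOn f (spectrum ℝ A) :=
  A.finite_real_spectrum.continuousOn f

theorem re_trace_cfc (hA : A.IsHermitian) (f : ℝ → ℝ) :
    RCLike.re (cfc f A).trace = ∑ i, f (hA.eigenvalues i) := by
  rw [hA.cfc_eq, Matrix.IsHermitian.cfc, Unitary.conjStarAlgAut_apply, trace_mul_cycle,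
    Unitary.coe_star_mul_self, one_mul, trace_diagonal]
  simp

theorem exists_weights_re_trace_cfc_mul_cfc (hA : A.IsHermitian) (hB : B.IsHermitian) :
    ∃ W : n → n → ℝ, (∀ i j, 0 ≤ W i j) ∧ ∀ f g : ℝ → ℝ,
      RCLike.re (cfc f A * cfc g B).trace =
        ∑ i, ∑ j, W i j * (f (hA.eigenvalues i) * g (hB.eigenvalues j)) := by
  let U := (hA.eigenvectorUnitary : Matrix n n 𝕜)
  let V := (hB.eigenvectorUnitary : Matrix n n 𝕜)
  obtain ⟨Z, hZ⟩ : ∃ Z, Z = star U * V := ⟨_, rfl⟩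
  -- The weights are `‖⟨uᵢ, vⱼ⟩‖ ^ 2` for the two eigenbases `u` and `v`.
  refine ⟨fun i j ↦ ‖Z i j‖ ^ 2, fun i j ↦ by positivity, fun f g ↦ ?_⟩
  let F : Matrix n n 𝕜 := diagonal (RCLike.ofReal ∘ f ∘ hA.eigenvalues)
  let G : Matrix n n 𝕜 := diagonal (RCLike.ofReal ∘ g ∘ hB.eigenvalues)
  have trace_eq : (cfc f A * cfc g B).trace = (F * Z * (G * star Z)).trace := by
    rw [hA.cfc_eq, hB.cfc_eq, Matrix.IsHermitian.cfc, Matrix.IsHermitian.cfc,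
      Unitary.conjStarAlgAut_apply, Unitary.conjStarAlgAut_apply]
    change (U * F * star U * (V * G * star V)).trace = _
    rw [mul_assoc U F, mul_assoc U, trace_mul_comm, hZ]
    simp only [mul_assoc, star_mul, star_star]
  have entry_eq (a b : ℝ) (z : 𝕜) :
      RCLike.re ((a : 𝕜) * z * ((b : 𝕜) * star z)) = ‖z‖ ^ 2 * (a * b) := by
    rw [mul_mul_mul_comm, RCLike.star_def, RCLike.mul_conj]
    norm_cast
    ring
  rw [trace_eq]
  simp only [trace, diag, mul_apply (M := F * Z), F, G, diagonal_mul, map_sum, star_apply,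
    Function.comp_apply, entry_eq]

theorem cfc_unitary_conj (U : unitary (Matrix n n 𝕜)) (f : ℝ → ℝ) (hA : A.IsHermitian) :
    cfc f (Unitary.conjStarAlgAut 𝕜 _ U A) = Unitary.conjStarAlgAut 𝕜 _ U (cfc f A) := by
  refine (StarAlgHomClass.map_cfc (S := 𝕜) (Unitary.conjStarAlgAut 𝕜 _ U) f A
    (continuousOn_spectrum _ _) ?_ hA (hA.isSelfAdjoint.map _)).symm
  change Continuous fun X : Matrix n n 𝕜 ↦ (U : Matrix n n 𝕜) * X * star (U : Matrix n n 𝕜)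
  fun_prop

open scoped MatrixOrder in
theorem spectrum_pos (hA : A.PosDef) : ∀ x ∈ spectrum ℝ A, 0 < x := fun _ ↦
  hA.isStrictlyPositive.spectrum_pos

theorem posDef_cfc {f : ℝ → ℝ} (hA : A.IsHermitian) (hf : ∀ x ∈ spectrum ℝ A, 0 < f x) :
    (cfc f A).PosDef := by
  rw [hA.cfc_eq, Matrix.IsHermitian.cfc, Unitary.conjStarAlgAut_apply,
    Matrix.IsUnit.posDef_star_right_conjugate_iff (Unitary.isUnit_coe), posDef_diagonal_iff]
  intro i
  simpa using hf _ (hA.eigenvalues_mem_spectrum_real i)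

theorem inv_eq_cfc (hA : A.PosDef) : A⁻¹ = cfc (fun x : ℝ ↦ x⁻¹) A := by
  rw [nonsing_inv_eq_ringInverse, cfc_ringInverse_id A hA.isUnit hA.isHermitian.isSelfAdjoint]

theorem posDef_conj {C : Matrix n n 𝕜} (hC : IsUnit C) (hA : A.PosDef) : (C * A * Cᴴ).PosDef :=
  (Matrix.IsUnit.posDef_star_right_conjugate_iff hC).2 hA

theorem posDef_cfc_sqrt (hA : A.PosDef) : (cfc Real.sqrt A).PosDef :=
  posDef_cfc hA.isHermitian fun x hx ↦ Real.sqrt_pos.2 (spectrum_pos hA x hx)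

theorem cfc_sqrt_mul_self (hA : A.PosDef) : cfc Real.sqrt A * cfc Real.sqrt A = A := by
  rw [← cfc_mul Real.sqrt Real.sqrt A]
  exact (cfc_congr fun x hx ↦ Real.mul_self_sqrt (spectrum_pos hA x hx).le).trans
    (cfc_id' ℝ A hA.isHermitian)

theorem sqrt_inv_mul_self_mul_sqrt_inv (hA : A.PosDef) :
    (cfc Real.sqrt A)⁻¹ * A * (cfc Real.sqrt A)⁻¹ = 1 := by
  have hdet := (isUnit_iff_isUnit_det _).1 (posDef_cfc_sqrt hA).isUnit
  nth_rw 2 [← cfc_sqrt_mul_self hA]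
  rw [nonsing_inv_mul_cancel_left _ _ hdet, mul_nonsing_inv _ hdet]

theorem cfc_log_exp (hS : S.IsHermitian) : cfc Real.log (cfc Real.exp S) = S := by
  rw [← cfc_comp' Real.log Real.exp S ((S.finite_real_spectrum.image _).continuousOn _)
    (by fun_prop) hS.isSelfAdjoint]
  simp only [Real.log_exp, cfc_id' ℝ S hS.isSelfAdjoint]

theorem cfc_exp_log (hA : A.PosDef) : cfc Real.exp (cfc Real.log A) = A := by
  rw [← cfc_comp' Real.exp Real.log A (by fun_prop) (continuousOn_spectrum _ A)
    hA.isHermitian.isSelfAdjoint]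
  exact (cfc_congr fun x hx ↦ Real.exp_log (spectrum_pos hA x hx)).trans
    (cfc_id' ℝ A hA.isHermitian)

theorem posDef_cfc_exp (hS : S.IsHermitian) : (cfc Real.exp S).PosDef :=
  posDef_cfc hS fun x _ ↦ Real.exp_pos x

theorem posDef_exp_conj (hS : S.IsHermitian) (hB : B.PosDef) :
    (cfc Real.exp S * B * cfc Real.exp S).PosDef := by
  have hexp := posDef_cfc_exp hS
  simpa only [hexp.isHermitian.eq] using posDef_conj hexp.isUnit hB

theorem cfc_exp_zero : cfc Real.exp (0 : Matrix n n 𝕜) = 1 := by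
  simp [cfc_apply_zero]

theorem cfc_exp_smul (hS : S.IsHermitian) (t : ℝ) :
    cfc Real.exp (t • S) = cfc (fun x ↦ Real.exp (t * x)) S :=
  (cfc_comp_const_mul t Real.exp S (by fun_prop) hS).symm

theorem cfc_exp_smul_mul (hS : S.IsHermitian) (s t : ℝ) :
    cfc Real.exp (s • S) * cfc Real.exp (t • S) = cfc Real.exp ((s + t) • S) := by
  simp only [cfc_exp_smul hS, ← Real.exp_add, add_mul,
    ← cfc_mul _ _ S (continuousOn_spectrum _ S) (continuousOn_spectrum _ S)]

theorem cfc_exp_smul_inv (hS : S.IsHermitian) (t : ℝ) :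
    (cfc Real.exp (t • S))⁻¹ = cfc Real.exp (-t • S) :=
  Matrix.inv_eq_left_inv (by rw [cfc_exp_smul_mul hS, neg_add_cancel, zero_smul, cfc_exp_zero])

theorem continuous_cfc_exp_smul (hS : S.IsHermitian) :
    Continuous fun t : ℝ ↦ cfc Real.exp (t • S) := by
  simp only [cfc_exp_smul hS, hS.cfc_eq, Matrix.IsHermitian.cfc, Unitary.conjStarAlgAut_apply]
  change Continuous fun t : ℝ ↦ _ * diagonal (fun i ↦ (Real.exp (t * hS.eigenvalues i) : 𝕜)) * _
  have : Continuous (RCLike.ofReal : ℝ → 𝕜) := RCLike.continuous_ofReal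
  fun_prop

end FunctionalCalculus

section KarcherMean

open scoped Matrix.Norms.Frobenius

section FrobeniusInnerProduct

variable {m n 𝕜 : Type*} [RCLike 𝕜] [Fintype m] [Fintype n]

/-- The real Hilbert–Schmidt inner product `⟪X, Y⟫ = Re tr(Xᴴ Y)`, whose norm is the Frobenius
norm. It is only a local instance because Mathlib leaves the choice of a matrix norm open. -/
@[reducible]
noncomputable def frobeniusInnerProductSpace : InnerProductSpace ℝ (Matrix m n 𝕜) where
  inner X Y := RCLike.re (Xᴴ * Y).trace
  norm_sq_eq_re_inner X := by
    rw [frobenius_norm_def, ← Real.sqrt_eq_rpow, Real.sq_sqrt (by positivity), Finset.sum_comm]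
    simp [Matrix.trace, mul_apply, RCLike.norm_sq_eq_def]
  conj_inner_symm X Y := by
    rw [conj_trivial, ← RCLike.conj_re, ← RCLike.star_def, ← trace_conjTranspose, conjTranspose_mul,
      conjTranspose_conjTranspose]
  add_left X Y Z := by simp [Matrix.add_mul]
  smul_left X Y r := by simp [RCLike.smul_re]

attribute [local instance] frobeniusInnerProductSpace

open scoped RealInnerProductSpace

theorem frobenius_inner_eq (X Y : Matrix m n 𝕜) : ⟪X, Y⟫ = RCLike.re (Xᴴ * Y).trace :=
  rfl

theorem frobenius_norm_sq_eq (X : Matrix m n 𝕜) : ‖X‖ ^ 2 = RCLike.re (Xᴴ * X).trace :=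
  (real_inner_self_eq_norm_sq X).symm

end FrobeniusInnerProduct

attribute [local instance] frobeniusInnerProductSpace

open Filter Topology
open scoped RealInnerProductSpace

variable {n 𝕜 : Type*} [RCLike 𝕜] [Fintype n] [DecidableEq n] {B C P Q S : Matrix n n 𝕜}

theorem frobenius_norm_unitary_conj (U : unitary (Matrix n n 𝕜)) (X : Matrix n n 𝕜) :
    ‖Unitary.conjStarAlgAut 𝕜 _ U X‖ = ‖X‖ := by
  rw [← sq_eq_sq₀ (norm_nonneg _) (norm_nonneg _), frobenius_norm_sq_eq, frobenius_norm_sq_eq,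
    ← star_eq_conjTranspose, ← star_eq_conjTranspose, ← map_star, ← map_mul,
    Unitary.conjStarAlgAut_apply, trace_mul_cycle, Unitary.coe_star_mul_self, one_mul]

theorem frobenius_norm_sq_eq_sum_eigenvalues_sq (hS : S.IsHermitian) :
    ‖S‖ ^ 2 = ∑ i, hS.eigenvalues i ^ 2 := by
  rw [frobenius_norm_sq_eq, hS.eq, ← sq, ← cfc_pow_id (R := ℝ) S 2 hS.isSelfAdjoint,
    re_trace_cfc hS]

/-! ### The symmetric divergence -/

/-- The symmetric divergence `Re tr(P⁻¹Q + Q⁻¹P - 2)` of positive definite matrices. When `P⁻¹Q` has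
eigenvalues `exp κᵢ` it equals `∑ᵢ (2 sinh (κᵢ / 2))²`, which approximates `δ(P, Q)² = ∑ᵢ κᵢ²` to
second order. -/
noncomputable def symDiv (P Q : Matrix n n 𝕜) : ℝ :=
  RCLike.re (P⁻¹ * Q + Q⁻¹ * P - 2).trace

theorem symDiv_self (hP : IsUnit P) : symDiv P P = 0 := by
  rw [symDiv, nonsing_inv_mul P ((isUnit_iff_isUnit_det P).1 hP), one_add_one_eq_two, sub_self,
    trace_zero, map_zero]

theorem symDiv_conj (hC : IsUnit C) (P Q : Matrix n n 𝕜) :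
    symDiv (C * P * Cᴴ) (C * Q * Cᴴ) = symDiv P Q := by
  have hdet := (isUnit_iff_isUnit_det C).1 hC
  have hdet_star := (isUnit_iff_isUnit_det Cᴴ).1 hC.star
  have inv_mul_eq (X Y : Matrix n n 𝕜) :
      (C * X * Cᴴ)⁻¹ * (C * Y * Cᴴ) = (Cᴴ)⁻¹ * (X⁻¹ * Y) * Cᴴ := by
    simp only [Matrix.mul_inv_rev, mul_assoc, nonsing_inv_mul_cancel_left _ _ hdet]
  have two_eq : (2 : Matrix n n 𝕜) = (Cᴴ)⁻¹ * 2 * Cᴴ := by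
    rw [mul_two, add_mul, nonsing_inv_mul _ hdet_star, one_add_one_eq_two]
  have conj_eq : (C * P * Cᴴ)⁻¹ * (C * Q * Cᴴ) + (C * Q * Cᴴ)⁻¹ * (C * P * Cᴴ) - 2 =
      (Cᴴ)⁻¹ * (P⁻¹ * Q + Q⁻¹ * P - 2) * Cᴴ := by
    rw [inv_mul_eq, inv_mul_eq, mul_sub, sub_mul, ← two_eq, mul_add, add_mul]
  rw [symDiv, conj_eq, trace_mul_cycle, mul_nonsing_inv _ hdet_star, one_mul, symDiv]

theorem sq_norm_log_sub_log_le_symDiv (hP : P.PosDef) (hQ : Q.PosDef) :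
    ‖cfc Real.log Q - cfc Real.log P‖ ^ 2 ≤ symDiv P Q := by
  obtain ⟨W, hW, trace_eq⟩ := exists_weights_re_trace_cfc_mul_cfc hP.isHermitian hQ.isHermitian
  have hPs := hP.isHermitian.isSelfAdjoint
  have hQs := hQ.isHermitian.isSelfAdjoint
  have norm_eq : ‖cfc Real.log Q - cfc Real.log P‖ ^ 2 =
      RCLike.re (cfc (Real.log · ^ 2) P * cfc (fun _ ↦ (1 : ℝ)) Q).trace
        + RCLike.re (cfc (fun _ ↦ (1 : ℝ)) P * cfc (Real.log · ^ 2) Q).trace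
        - 2 * RCLike.re (cfc Real.log P * cfc Real.log Q).trace := by
    rw [norm_sub_sq_real, frobenius_norm_sq_eq, frobenius_norm_sq_eq, frobenius_inner_eq,
      (cfc_predicate Real.log P).isHermitian.eq, (cfc_predicate Real.log Q).isHermitian.eq,
      trace_mul_comm (cfc Real.log Q) (cfc Real.log P), cfc_const_one ℝ P hPs,
      cfc_const_one ℝ Q hQs, cfc_pow _ 2 P (continuousOn_spectrum _ P) hPs,
      cfc_pow _ 2 Q (continuousOn_spectrum _ Q) hQs, mul_one, one_mul, ← sq, ← sq]
    ring
  have symDiv_eq : symDiv P Q =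
      RCLike.re (cfc (fun x : ℝ ↦ x⁻¹) P * cfc (fun x : ℝ ↦ x) Q).trace
        + RCLike.re (cfc (fun x : ℝ ↦ x) P * cfc (fun x : ℝ ↦ x⁻¹) Q).trace
        - 2 * RCLike.re (cfc (fun _ ↦ (1 : ℝ)) P * cfc (fun _ ↦ (1 : ℝ)) Q).trace := by
    rw [← inv_eq_cfc hP, ← inv_eq_cfc hQ, cfc_id' ℝ P hPs, cfc_id' ℝ Q hQs,
      cfc_const_one ℝ P hPs, cfc_const_one ℝ Q hQs, mul_one, symDiv, trace_mul_comm P Q⁻¹]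
    simp only [← one_add_one_eq_two (R := Matrix n n 𝕜), trace_sub, trace_add, trace_one, map_sub,
      map_add, RCLike.natCast_re]
    ring
  rw [norm_eq, symDiv_eq]
  simp only [trace_eq, Finset.mul_sum, ← Finset.sum_add_distrib, ← Finset.sum_sub_distrib]
  refine Finset.sum_le_sum fun i _ ↦ Finset.sum_le_sum fun j _ ↦ ?_
  have := mul_le_mul_of_nonneg_left
    (sq_log_sub_log_le (hP.eigenvalues_pos i) (hQ.eigenvalues_pos j)) (hW i j)
  linarith

theorem symDiv_exp_smul (hS : S.IsHermitian) (s t : ℝ) :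
    symDiv (cfc Real.exp (s • S)) (cfc Real.exp (t • S)) =
      ∑ i, (2 * Real.sinh ((t - s) * hS.eigenvalues i / 2)) ^ 2 := by
  have eq_cfc : (cfc Real.exp (s • S))⁻¹ * cfc Real.exp (t • S)
        + (cfc Real.exp (t • S))⁻¹ * cfc Real.exp (s • S) - 2 =
      cfc (fun x ↦ Real.exp ((-s + t) * x) + Real.exp ((-t + s) * x) - 2) S := by
    rw [cfc_exp_smul_inv hS, cfc_exp_smul_inv hS, cfc_exp_smul_mul hS, cfc_exp_smul_mul hS,
      cfc_exp_smul hS, cfc_exp_smul hS, cfc_sub _ _ S, cfc_add S _ _,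
      cfc_const _ S hS.isSelfAdjoint, map_ofNat]
  rw [symDiv, eq_cfc, re_trace_cfc hS]
  refine Finset.sum_congr rfl fun i _ ↦ ?_
  rw [sq_two_mul_sinh_half]
  ring_nf

theorem continuousOn_cfc_log :
    ContinuousOn (fun P : Matrix n n 𝕜 ↦ cfc Real.log P) {P | P.PosDef} := by
  intro P (hP : P.PosDef)
  have hdet := (isUnit_iff_isUnit_det P).1 hP.isUnit
  have hinv : ContinuousAt (fun Q : Matrix n n 𝕜 ↦ Q⁻¹) P :=
    continuousAt_matrix_inv P (NormedRing.inverse_continuousAt hdet.unit)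
  have hsymDiv : ContinuousAt (fun Q ↦ √(symDiv P Q)) P := by
    have := RCLike.continuous_re (K := 𝕜)
    unfold symDiv
    fun_prop
  have hlim : Tendsto (fun Q ↦ √(symDiv P Q)) (𝓝 P) (𝓝 0) := by
    simpa only [ContinuousAt, symDiv_self hP.isUnit, Real.sqrt_zero] using hsymDiv
  refine tendsto_iff_norm_sub_tendsto_zero.2 <| squeeze_zero' (.of_forall fun _ ↦ norm_nonneg _)
    (eventually_mem_nhdsWithin.mono fun Q (hQ : Q.PosDef) ↦ ?_) (hlim.mono_left nhdsWithin_le_nhds)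
  exact Real.le_sqrt_of_sq_le (sq_norm_log_sub_log_le_symDiv hP hQ)

theorem tendsto_log_exp_conj (hS : S.IsHermitian) (hB : B.PosDef) :
    Tendsto (fun t : ℝ ↦ cfc Real.log (cfc Real.exp (t • S) * B * cfc Real.exp (t • S))) (𝓝 0)
      (𝓝 (cfc Real.log B)) := by
  have hcont : Continuous fun t : ℝ ↦ cfc Real.exp (t • S) * B * cfc Real.exp (t • S) := by
    have := continuous_cfc_exp_smul hS
    fun_prop
  have := continuousOn_cfc_log.comp_continuous hcont
    (fun t ↦ posDef_exp_conj (hS.smul (.all t)) hB) |>.tendsto 0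
  simpa only [Function.comp_def, zero_smul, cfc_exp_zero, one_mul, mul_one] using this

/-! ### The exponential metric increasing property -/

theorem tendsto_sqrt_sum_sinh_div (hS : S.IsHermitian) :
    Tendsto (fun h ↦ √(∑ i, (2 * Real.sinh (h * hS.eigenvalues i / 2)) ^ 2) / h) (𝓝[>] 0)
      (𝓝 ‖S‖) := by
  have norm_eq : ‖S‖ = √(∑ i, hS.eigenvalues i ^ 2) := by
    rw [← frobenius_norm_sq_eq_sum_eigenvalues_sq, Real.sqrt_sq (norm_nonneg _)]
  have hlim := (tendsto_finsetSum Finset.univ fun i _ ↦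
    (tendsto_two_mul_sinh_div (hS.eigenvalues i)).pow 2).sqrt
  rw [norm_eq]
  refine hlim.congr' (eventually_mem_nhdsWithin.mono fun h (hh : 0 < h) ↦ ?_)
  simp only [div_pow, ← Finset.sum_div]
  rw [Real.sqrt_div' _ (sq_nonneg h), Real.sqrt_sq hh.le]

theorem norm_log_conj_exp_sub_log_le (hC : IsUnit C) (hS : S.IsHermitian) :
    ‖cfc Real.log (C * cfc Real.exp S * Cᴴ) - cfc Real.log (C * Cᴴ)‖ ≤ ‖S‖ := by
  have hpos (t : ℝ) : (C * cfc Real.exp (t • S) * Cᴴ).PosDef :=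
    posDef_conj hC (posDef_cfc_exp (hS.smul (.all t)))
  have hdist (s t : ℝ) : dist (cfc Real.log (C * cfc Real.exp (s • S) * Cᴴ))
      (cfc Real.log (C * cfc Real.exp (t • S) * Cᴴ)) ≤
        √(∑ i, (2 * Real.sinh ((t - s) * hS.eigenvalues i / 2)) ^ 2) := by
    rw [dist_comm, dist_eq_norm, ← symDiv_exp_smul hS, ← symDiv_conj hC]
    exact Real.le_sqrt_of_sq_le (sq_norm_log_sub_log_le_symDiv (hpos s) (hpos t))
  have := dist_le_of_tendsto_modulus hdist (tendsto_sqrt_sum_sinh_div hS)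
  rwa [one_smul, zero_smul, cfc_exp_zero, mul_one, dist_comm, dist_eq_norm] at this

/-- The logarithm `log (P^{-1/2} Q P^{-1/2})` of `Q` as seen from `P`: the initial velocity of the
geodesic from `P` to `Q`, transported to the identity by the congruence `P^{-1/2}`. -/
noncomputable def relLog (P Q : Matrix n n 𝕜) : Matrix n n 𝕜 :=
  cfc Real.log ((cfc Real.sqrt P)⁻¹ * Q * (cfc Real.sqrt P)⁻¹)

/-- The Riemannian (affine-invariant) distance `δ(P, Q)` between positive definite matrices. -/
noncomputable def riemDist (P Q : Matrix n n 𝕜) : ℝ :=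
  ‖relLog P Q‖

theorem sqrt_mul_exp_relLog_mul_sqrt (hP : P.PosDef) (hQ : Q.PosDef) :
    cfc Real.sqrt P * cfc Real.exp (relLog P Q) * cfc Real.sqrt P = Q := by
  have hR := posDef_cfc_sqrt hP
  have hdet := (isUnit_iff_isUnit_det _).1 hR.isUnit
  have hpos : ((cfc Real.sqrt P)⁻¹ * Q * (cfc Real.sqrt P)⁻¹).PosDef := by
    simpa only [hR.inv.isHermitian.eq] using posDef_conj hR.inv.isUnit hQ
  rw [relLog, cfc_exp_log hpos, mul_assoc _ Q, mul_nonsing_inv_cancel_left _ _ hdet,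
    nonsing_inv_mul_cancel_right _ _ hdet]

theorem norm_log_sub_log_le_riemDist (hP : P.PosDef) (hQ : Q.PosDef) :
    ‖cfc Real.log Q - cfc Real.log P‖ ≤ riemDist P Q := by
  have hR := posDef_cfc_sqrt hP
  have hL : (relLog P Q).IsHermitian := cfc_predicate _ _
  simpa only [hR.isHermitian.eq, sqrt_mul_exp_relLog_mul_sqrt hP hQ, cfc_sqrt_mul_self hP,
    riemDist] using norm_log_conj_exp_sub_log_le hR.isUnit hL

/-! ### Congruence invariance of the Riemannian distance -/

theorem norm_log_conj_eq_riemDist (hP : P.PosDef) (hQ : Q.IsHermitian) (hC : C * P * Cᴴ = 1) :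
    ‖cfc Real.log (C * Q * Cᴴ)‖ = riemDist P Q := by
  set R := cfc Real.sqrt P with hRdef
  have hR : R.PosDef := posDef_cfc_sqrt hP
  have hdet := (isUnit_iff_isUnit_det _).1 hR.isUnit
  -- `C` and `P^{-1/2}` both carry `P` to `1`, so they differ by a unitary factor.
  let U : unitary (Matrix n n 𝕜) := ⟨C * R, mem_unitaryGroup_iff.2 <| by
    rw [star_mul, star_eq_conjTranspose, star_eq_conjTranspose, hR.isHermitian.eq, ← hC,
      ← cfc_sqrt_mul_self hP]
    simp only [mul_assoc, hRdef]⟩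
  have conj_eq : C * Q * Cᴴ = Unitary.conjStarAlgAut 𝕜 _ U (R⁻¹ * Q * R⁻¹) := by
    simp only [Unitary.conjStarAlgAut_apply, U, star_mul, star_eq_conjTranspose, hR.isHermitian.eq,
      mul_assoc, nonsing_inv_mul_cancel_left _ _ hdet, mul_nonsing_inv_cancel_left _ _ hdet]
  have hherm : (R⁻¹ * Q * R⁻¹).IsHermitian := by
    simpa only [hR.inv.isHermitian.eq] using isHermitian_mul_mul_conjTranspose R⁻¹ hQ
  rw [conj_eq, cfc_unitary_conj U _ hherm, frobenius_norm_unitary_conj, riemDist, relLog]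

theorem riemDist_one (hQ : Q.IsHermitian) : riemDist 1 Q = ‖cfc Real.log Q‖ := by
  simpa using (norm_log_conj_eq_riemDist (C := 1) PosDef.one hQ (by simp)).symm

theorem riemDist_conj (hC : IsUnit C) (hP : P.PosDef) (hQ : Q.IsHermitian) :
    riemDist (C * P * Cᴴ) (C * Q * Cᴴ) = riemDist P Q := by
  have hR := posDef_cfc_sqrt hP
  have hdet := (isUnit_iff_isUnit_det _).1 hC
  have hdet_star := (isUnit_iff_isUnit_det Cᴴ).1 hC.star
  have cancel (X : Matrix n n 𝕜) : (cfc Real.sqrt P)⁻¹ * C⁻¹ * (C * X * Cᴴ) *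
      ((cfc Real.sqrt P)⁻¹ * C⁻¹)ᴴ = (cfc Real.sqrt P)⁻¹ * X * (cfc Real.sqrt P)⁻¹ := by
    simp only [conjTranspose_mul, hR.inv.isHermitian.eq, conjTranspose_nonsing_inv, mul_assoc,
      nonsing_inv_mul_cancel_left _ _ hdet, mul_nonsing_inv_cancel_left _ _ hdet_star]
  rw [← norm_log_conj_eq_riemDist (posDef_conj hC hP) (isHermitian_mul_mul_conjTranspose C hQ)
    ((cancel P).trans (sqrt_inv_mul_self_mul_sqrt_inv hP)), cancel, riemDist, relLog]

theorem riemDist_exp_sq_add_inner_le (hS : S.IsHermitian) (hB : B.PosDef) (t : ℝ) :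
    riemDist (cfc Real.exp ((2 * t) • S)) B ^ 2
      + 4 * t * ⟪S, cfc Real.log (cfc Real.exp (-t • S) * B * cfc Real.exp (-t • S))⟫ ≤
      riemDist 1 B ^ 2 := by
  set E := cfc Real.exp (-t • S) with hE
  have hEpos : E.PosDef := posDef_cfc_exp (hS.smul (.all (-t)))
  have hEBE : (E * B * E).PosDef := posDef_exp_conj (hS.smul (.all (-t))) hB
  have dist_exp : riemDist (cfc Real.exp ((2 * t) • S)) B = ‖cfc Real.log (E * B * E)‖ := by
    have hE_one : E * cfc Real.exp ((2 * t) • S) * Eᴴ = 1 := by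
      rw [hEpos.isHermitian.eq, hE, cfc_exp_smul_mul hS, cfc_exp_smul_mul hS,
        show -t + 2 * t + -t = 0 by ring, zero_smul, cfc_exp_zero]
    rw [← norm_log_conj_eq_riemDist (posDef_cfc_exp (hS.smul (.all _))) hB.isHermitian hE_one,
      hEpos.isHermitian.eq]
  have dist_one : riemDist 1 B = riemDist (cfc Real.exp (-(2 * t) • S)) (E * B * E) := by
    rw [← riemDist_conj hEpos.isUnit .one hB.isHermitian, hEpos.isHermitian.eq, mul_one, hE,
      cfc_exp_smul_mul hS, show -t + -t = -(2 * t) by ring]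
  have norm_le := norm_log_sub_log_le_riemDist
    (posDef_cfc_exp (hS.smul (.all (-(2 * t))))) hEBE
  rw [← dist_one, cfc_log_exp (hS.smul (.all _))] at norm_le
  have sq_le := pow_le_pow_left₀ (norm_nonneg _) norm_le 2
  rw [norm_sub_sq_real, real_inner_smul_right, real_inner_comm] at sq_le
  rw [dist_exp]
  linarith [sq_nonneg ‖-(2 * t) • S‖]

/-! ### Minimizers of the weighted sum of squared distances -/

variable {ι : Type*} [Fintype ι] {w : ι → ℝ} {A : ι → Matrix n n 𝕜}

/-- The objective function `Y ↦ ∑ᵢ wᵢ δ²(Y, Aᵢ)` whose minimizer over the positive definite matrices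
is the Karcher mean. -/
noncomputable def karcherCost (w : ι → ℝ) (A : ι → Matrix n n 𝕜) (Y : Matrix n n 𝕜) : ℝ :=
  ∑ i, w i * riemDist Y (A i) ^ 2

theorem karcherCost_one_le (hw : ∀ i, 0 ≤ w i) (hA : ∀ i, (A i).PosDef)
    (hsum : ∑ i, w i • cfc Real.log (A i) = 0) (hP : P.PosDef) :
    karcherCost w A 1 ≤ karcherCost w A P := by
  have dist_le (i : ι) : riemDist 1 (A i) ^ 2 - 2 * ⟪cfc Real.log P, cfc Real.log (A i)⟫ ≤
      riemDist P (A i) ^ 2 := by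
    have sq_le := pow_le_pow_left₀ (norm_nonneg _) (norm_log_sub_log_le_riemDist hP (hA i)) 2
    rw [norm_sub_sq_real, real_inner_comm] at sq_le
    rw [riemDist_one (hA i).isHermitian]
    linarith [sq_nonneg ‖cfc Real.log P‖]
  have inner_sum_eq_zero : ∑ i, w i * ⟪cfc Real.log P, cfc Real.log (A i)⟫ = 0 := by
    simp only [← real_inner_smul_right, ← inner_sum, hsum, inner_zero_right]
  calc karcherCost w A 1
      = ∑ i, w i * (riemDist 1 (A i) ^ 2 - 2 * ⟪cfc Real.log P, cfc Real.log (A i)⟫) := by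
        simp only [mul_sub, Finset.sum_sub_distrib, mul_left_comm _ (2 : ℝ), ← Finset.mul_sum,
          inner_sum_eq_zero, mul_zero, sub_zero, karcherCost]
    _ ≤ karcherCost w A P :=
        Finset.sum_le_sum fun i _ ↦ mul_le_mul_of_nonneg_left (dist_le i) (hw i)

theorem karcherCost_exp_add_inner_le (hw : ∀ i, 0 ≤ w i) (hA : ∀ i, (A i).PosDef)
    (hS : S.IsHermitian) (t : ℝ) :
    karcherCost w A (cfc Real.exp ((2 * t) • S)) + 4 * t * ∑ i, w i *
      ⟪S, cfc Real.log (cfc Real.exp (-t • S) * A i * cfc Real.exp (-t • S))⟫ ≤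
      karcherCost w A 1 := by
  simp only [karcherCost, Finset.mul_sum, ← Finset.sum_add_distrib]
  refine Finset.sum_le_sum fun i _ ↦ ?_
  linarith [mul_le_mul_of_nonneg_left (riemDist_exp_sq_add_inner_le hS (hA i) t) (hw i)]

theorem sum_smul_log_eq_zero_of_isMinOn (hw : ∀ i, 0 ≤ w i) (hA : ∀ i, (A i).PosDef)
    (hmin : IsMinOn (karcherCost w A) {P | P.PosDef} 1) :
    ∑ i, w i • cfc Real.log (A i) = 0 := by
  set S := ∑ i, w i • cfc Real.log (A i)
  have hS : S.IsHermitian := isSelfAdjoint_sum _ fun i _ ↦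
    (IsSelfAdjoint.all (w i)).smul (cfc_predicate Real.log (A i))
  let G (t : ℝ) (i : ι) := cfc Real.log (cfc Real.exp (t • S) * A i * cfc Real.exp (t • S))
  have inner_nonpos {t : ℝ} (ht : 0 < t) : ∑ i, w i * ⟪S, G (-t) i⟫ ≤ 0 := by
    have one_le := isMinOn_iff.1 hmin _ (posDef_cfc_exp (hS.smul (.all (2 * t))))
    have mul_le : 4 * t * ∑ i, w i * ⟪S, G (-t) i⟫ ≤ 0 := by
      linarith [karcherCost_exp_add_inner_le hw hA hS t, one_le]
    exact nonpos_of_mul_nonpos_right mul_le (by positivity)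
  have hlim : Tendsto (fun t : ℝ ↦ ∑ i, w i * ⟪S, G (-t) i⟫) (𝓝[>] 0)
      (𝓝 (∑ i, w i * ⟪S, cfc Real.log (A i)⟫)) := by
    refine tendsto_finsetSum _ fun i _ ↦ (Tendsto.inner tendsto_const_nhds ?_).const_mul (w i)
    refine (tendsto_log_exp_conj hS (hA i)).comp ?_
    simpa using (tendsto_neg (0 : ℝ)).mono_left nhdsWithin_le_nhds
  have inner_self_nonpos := le_of_tendsto hlim (eventually_mem_nhdsWithin.mono fun _ ↦ inner_nonpos)
  simp only [← real_inner_smul_right, ← inner_sum] at inner_self_nonpos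
  exact real_inner_self_nonpos.1 inner_self_nonpos

theorem isMinOn_karcherCost_one_iff (hw : ∀ i, 0 ≤ w i) (hA : ∀ i, (A i).PosDef) :
    IsMinOn (karcherCost w A) {P | P.PosDef} 1 ↔ ∑ i, w i • cfc Real.log (A i) = 0 :=
  ⟨sum_smul_log_eq_zero_of_isMinOn hw hA, fun hsum _ ↦ karcherCost_one_le hw hA hsum⟩

theorem karcherCost_conj (hC : IsUnit C) (hA : ∀ i, (A i).IsHermitian) (hP : P.PosDef) :
    karcherCost w (fun i ↦ C * A i * Cᴴ) (C * P * Cᴴ) = karcherCost w A P := by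
  simp only [karcherCost, riemDist_conj hC hP (hA _)]

theorem image_conj_posDef (hC : IsUnit C) :
    (fun P : Matrix n n 𝕜 ↦ C * P * Cᴴ) '' {P | P.PosDef} = {P | P.PosDef} := by
  refine Set.Subset.antisymm (Set.image_subset_iff.2 fun P hP ↦ posDef_conj hC hP) fun Q hQ ↦ ?_
  have hdet := (isUnit_iff_isUnit_det C).1 hC
  have hdet_star := (isUnit_iff_isUnit_det Cᴴ).1 hC.star
  refine ⟨C⁻¹ * Q * C⁻¹ᴴ, posDef_conj (isUnit_nonsing_inv_iff.2 hC) hQ, ?_⟩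
  simp only [conjTranspose_nonsing_inv, mul_assoc, nonsing_inv_mul _ hdet_star, mul_one,
    mul_nonsing_inv_cancel_left _ _ hdet]

theorem isMinOn_karcherCost_conj_iff (hC : IsUnit C) (hA : ∀ i, (A i).IsHermitian)
    (hP : P.PosDef) :
    IsMinOn (karcherCost w fun i ↦ C * A i * Cᴴ) {P | P.PosDef} (C * P * Cᴴ) ↔
      IsMinOn (karcherCost w A) {P | P.PosDef} P := by
  rw [isMinOn_iff, isMinOn_iff, ← image_conj_posDef hC, Set.forall_mem_image,
    image_conj_posDef hC, karcherCost_conj hC hA hP]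
  exact forall₂_congr fun Q hQ ↦ by rw [karcherCost_conj hC hA hQ]

theorem karcher_equation_general {X : Matrix n n 𝕜} (hA : ∀ i, (A i).PosDef)
    (hw : ∀ i, 0 ≤ w i) (hX : X.PosDef) :
    IsMinOn (karcherCost w A) {P | P.PosDef} X ↔ ∑ i, w i • relLog X (A i) = 0 := by
  have hC := (posDef_cfc_sqrt hX).inv
  have hB (i : ι) := posDef_conj hC.isUnit (hA i)
  have conj_iff := isMinOn_karcherCost_conj_iff (w := w) hC.isUnit (fun i ↦ (hA i).isHermitian) hX
  simp only [hC.isHermitian.eq, sqrt_inv_mul_self_mul_sqrt_inv hX] at conj_iff hB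
  rw [← conj_iff, isMinOn_karcherCost_one_iff hw hB]
  rfl

theorem matFun_eq_cfc {m : ℕ} (f : ℝ → ℝ) (A : Matrix (Fin m) (Fin m) ℂ) :
    matFun f A = cfc f A := by
  unfold matFun
  split_ifs with hA
  · rw [hA.cfc_eq]
    rfl
  · exact (cfc_apply_of_not_predicate A hA).symm

theorem mlog_sqrt_conj_eq_relLog {m : ℕ} (A B : Matrix (Fin m) (Fin m) ℂ) :
    mlog ((msqrt A)⁻¹ * B * (msqrt A)⁻¹) = relLog A B := by
  simp only [mlog, msqrt, matFun_eq_cfc, relLog]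

theorem fnorm_eq_norm {m : ℕ} (A : Matrix (Fin m) (Fin m) ℂ) : fnorm A = ‖A‖ := by
  rw [← Real.sqrt_sq (norm_nonneg A), frobenius_norm_sq_eq]
  rfl

theorem rdist_eq_riemDist {m : ℕ} (A B : Matrix (Fin m) (Fin m) ℂ) : rdist A B = riemDist A B := by
  rw [rdist, mlog_sqrt_conj_eq_relLog, fnorm_eq_norm, riemDist]

end KarcherMean

/-- The Karcher equation: a positive definite `X` minimizes `Y ↦ Σᵢ wᵢ δ²(Y, Aᵢ)` over the
positive definite matrices iff `Σᵢ wᵢ log(X^{-1/2} Aᵢ X^{-1/2}) = 0`. -/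
theorem karcher_equation {m n : ℕ} (A : Fin n → Matrix (Fin m) (Fin m) ℂ)
    (hA : ∀ i, (A i).PosDef) (w : Fin n → ℝ) (hw : ∀ i, 0 < w i) (hw1 : ∑ i, w i = 1)
    (X : Matrix (Fin m) (Fin m) ℂ) (hX : X.PosDef) :
    (∀ Y : Matrix (Fin m) (Fin m) ℂ, Y.PosDef →
        ∑ i, w i * rdist X (A i) ^ 2 ≤ ∑ i, w i * rdist Y (A i) ^ 2) ↔
      ∑ i, w i • mlog ((msqrt X)⁻¹ * A i * (msqrt X)⁻¹) = 0 := by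
  simpa only [isMinOn_iff, Set.mem_ofPred_eq, karcherCost, rdist_eq_riemDist,
    mlog_sqrt_conj_eq_relLog] using karcher_equation_general hA (fun i ↦ (hw i).le) hX
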